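/- arXiv:2401.11912 — 2 statements merged into one kernel-verified Lean document; each statement's English description precedes it below -/
import Mathlib

section
/- For every n ≥ 1, every maximal Arrow's single-peaked domain D on an n-element set X is exactly (k, 2^{k-1})-abundant for every k with 1 ≤ k ≤ n; in particular (taking k = n), D contains exactly 2^{n-1} linear orders. -/
/-- `r` is a strict total order on `X`, supported on `X` (i.e. `r` never relates
elements outside `X`). -/
def IsLinearOrderOn {α : Type*} (X : Set α) (r : α → α → Prop) : Prop :=
  (∀ a b, r a b → a ∈ X ∧ b ∈ X) ∧
  (∀ a ∈ X, ¬ r a a) ∧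
  (∀ a ∈ X, ∀ b ∈ X, ∀ c ∈ X, r a b → r b c → r a c) ∧
  (∀ a ∈ X, ∀ b ∈ X, a ≠ b → r a b ∨ r b a)

/-- A domain on `X` is a set of linear orders on `X`. -/
def IsDomainOn {α : Type*} (X : Set α) (D : Set (α → α → Prop)) : Prop :=
  ∀ r ∈ D, IsLinearOrderOn X r

/-- The restriction of the order `r` to the subset `A`. -/
def restrictRel {α : Type*} (A : Set α) (r : α → α → Prop) : α → α → Prop :=
  fun a b => a ∈ A ∧ b ∈ A ∧ r a b

/-- The restriction of the domain `D` to the subset `A`: the set of linear orders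
on `A` induced by the orders in `D`. -/
def restrictDom {α : Type*} (A : Set α) (D : Set (α → α → Prop)) :
    Set (α → α → Prop) :=
  restrictRel A '' D

/-- `D` is `(k,s)`-abundant on `X`: its restriction to every `k`-element subset of `X`
contains at least `s` distinct linear orders. -/
def IsAbundant {α : Type*} (X : Set α) (D : Set (α → α → Prop)) (k s : ℕ) : Prop :=
  ∀ A : Set α, A ⊆ X → A.ncard = k → s ≤ (restrictDom A D).ncard

/-- `D` is exactly `(k,s)`-abundant: `(k,s)`-abundant but not `(k,s+1)`-abundant. -/
def IsExactlyAbundant {α : Type*} (X : Set α) (D : Set (α → α → Prop)) (k s : ℕ) : Prop :=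
  IsAbundant X D k s ∧ ¬ IsAbundant X D k (s + 1)

/-- `D` is an Arrow's single-peaked domain on `X`: for every 3-element subset `T` of `X`
there is an `x ∈ T` that no order of `D` ranks last among the elements of `T`. -/
def IsArrowSinglePeaked {α : Type*} (X : Set α) (D : Set (α → α → Prop)) : Prop :=
  IsDomainOn X D ∧
  ∀ T : Set α, T ⊆ X → T.ncard = 3 →
    ∃ x ∈ T, ∀ r ∈ D, ¬ (∀ y ∈ T, y ≠ x → r y x)

/-- A maximal Arrow's single-peaked domain on `X`. -/
def IsMaximalArrowSinglePeaked {α : Type*} (X : Set α) (D : Set (α → α → Prop)) : Prop :=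
  IsArrowSinglePeaked X D ∧
  ∀ D' : Set (α → α → Prop), D ⊆ D' → IsArrowSinglePeaked X D' → D' = D

/-!
Record which alternatives may be ranked last in each triple by a ternary relation `P`. If every
subset `S` with at least two elements has exactly two alternatives that `P` permits in last place,
then an order on `S` obeying `P` is one of these two alternatives appended to an order obeying `P`
on the rest. So there are `2 ^ (|S| - 1)` such orders, and every order obeying `P` on a subset
extends to one on `S`.

Every nonempty Arrow's single-peaked domain `D` obeys such a `P`. Fix `r ∈ D` and take a triple
`a`, `b`, `c` in the order of `r`: forbid `a` in last place, unless `D` already ranks `a` last, in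
which case `D` never ranks `b` last and we forbid `b`. A maximal `D` therefore consists of all
orders obeying `P`.
-/

section LinearOrders

variable {α : Type*} {X S A : Set α} {r : α → α → Prop}

theorem IsLinearOrderOn.irrefl (hr : IsLinearOrderOn X r) (a : α) : ¬ r a a :=
  fun h => hr.2.1 a (hr.1 a a h).1 h

theorem IsLinearOrderOn.trans (hr : IsLinearOrderOn X r) {a b c : α} (hab : r a b)
    (hbc : r b c) : r a c :=
  hr.2.2.1 a (hr.1 a b hab).1 b (hr.1 a b hab).2 c (hr.1 b c hbc).2 hab hbc

theorem IsLinearOrderOn.asymm (hr : IsLinearOrderOn X r) {a b : α} (hab : r a b) : ¬ r b a :=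
  fun hba => hr.irrefl a (hr.trans hab hba)

theorem IsLinearOrderOn.ne (hr : IsLinearOrderOn X r) {a b : α} (hab : r a b) : a ≠ b :=
  fun h => hr.irrefl b (h ▸ hab)

theorem IsLinearOrderOn.restrictRel (hr : IsLinearOrderOn X r) (hA : A ⊆ X) :
    IsLinearOrderOn A (restrictRel A r) := by
  refine ⟨fun a b h => ⟨h.1, h.2.1⟩, fun a _ h => hr.irrefl a h.2.2,
    fun a ha b _ c hc hab hbc => ⟨ha, hc, hr.trans hab.2.2 hbc.2.2⟩, fun a ha b hb hab => ?_⟩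
  exact (hr.2.2.2 a (hA ha) b (hA hb) hab).imp (⟨ha, hb, ·⟩) (⟨hb, ha, ·⟩)

theorem IsLinearOrderOn.restrictRel_self (hr : IsLinearOrderOn X r) :
    _root_.restrictRel X r = r := by
  ext a b
  exact ⟨fun h => h.2.2, fun h => ⟨(hr.1 a b h).1, (hr.1 a b h).2, h⟩⟩

theorem exists_isLinearOrderOn (X : Set α) : ∃ r, IsLinearOrderOn X r := by
  have huniv : IsLinearOrderOn Set.univ (WellOrderingRel (α := α)) :=
    ⟨fun _ _ _ => ⟨trivial, trivial⟩, fun a _ => irrefl_of WellOrderingRel a,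
      fun _ _ _ _ _ _ => trans_of WellOrderingRel, fun a _ b _ hab =>
        (trichotomous_of WellOrderingRel a b).imp_right (Or.resolve_left · hab)⟩
  exact ⟨_, huniv.restrictRel (Set.subset_univ X)⟩

/-- The alternative `a` is the last element of `S` in the order `r`, where `r x y` means that
`x` is ranked above `y`. -/
def IsLastAmong (r : α → α → Prop) (S : Set α) (a : α) : Prop :=
  a ∈ S ∧ ∀ b ∈ S, b ≠ a → r b a

theorem IsLinearOrderOn.exists_isLastAmong (hr : IsLinearOrderOn X r) (hSX : S ⊆ X)
    (hS : S.Finite) (hne : S.Nonempty) : ∃ a, IsLastAmong r S a := by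
  have : IsStrictOrder α (Function.swap r) :=
    { irrefl := hr.irrefl, trans := fun _ _ _ hab hbc => hr.trans hbc hab }
  obtain ⟨⟨a, ha⟩, -, hmin⟩ := (hS.wellFoundedOn (r := Function.swap r)).has_min Set.univ
    ⟨⟨hne.some, hne.some_mem⟩, trivial⟩
  exact ⟨a, ha, fun b hb hba =>
    (hr.2.2.2 b (hSX hb) a (hSX ha) hba).resolve_right (hmin ⟨b, hb⟩ trivial)⟩

theorem IsLinearOrderOn.exists_sorted_triple (hr : IsLinearOrderOn X r) {T : Set α} (hTX : T ⊆ X)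
    (hT : T.ncard = 3) : ∃ a b c, r a b ∧ r b c ∧ T = {a, b, c} := by
  have hfin : T.Finite := Set.finite_of_ncard_pos (by lia)
  obtain ⟨c, hcT, hlast⟩ := hr.exists_isLastAmong hTX hfin (Set.nonempty_of_ncard_ne_zero (by lia))
  obtain ⟨a, b, hab, hpair⟩ := Set.ncard_eq_two.1
    (show (T \ {c}).ncard = 2 by rw [Set.ncard_sdiff_singleton_of_mem hcT, hT])
  have hT' : T = {c, a, b} := by rw [← hpair, Set.insert_sdiff_self_of_mem hcT]
  have ha : a ∈ T \ {c} := hpair ▸ Set.mem_insert a {b}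
  have hb : b ∈ T \ {c} := hpair ▸ Set.mem_insert_of_mem a rfl
  rcases hr.2.2.2 a (hTX ha.1) b (hTX hb.1) hab with h | h
  · exact ⟨a, b, c, h, hlast b hb.1 hb.2, by grind⟩
  · exact ⟨b, a, c, h, hlast a ha.1 ha.2, by grind⟩

end LinearOrders

section AppendLast

variable {α : Type*} {S A : Set α} {a : α} {q : α → α → Prop}

/-- The order on `S` that ranks the elements of `S \ {a}` by `q` and puts `a` last. -/
def appendLast (S : Set α) (a : α) (q : α → α → Prop) : α → α → Prop :=
  fun x y => q x y ∨ x ∈ S \ {a} ∧ y = a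

theorem isLastAmong_appendLast (ha : a ∈ S) : IsLastAmong (appendLast S a q) S a :=
  ⟨ha, fun _ hb hba => Or.inr ⟨⟨hb, hba⟩, rfl⟩⟩

theorem IsLinearOrderOn.appendLast (ha : a ∈ S) (hq : IsLinearOrderOn (S \ {a}) q) :
    IsLinearOrderOn S (appendLast S a q) := by
  refine ⟨?_, ?_, ?_, fun x hx y hy hxy => ?_⟩
  · rintro x y (h | ⟨hx, rfl⟩)
    · exact ⟨(hq.1 x y h).1.1, (hq.1 x y h).2.1⟩
    · exact ⟨hx.1, ha⟩
  · rintro x - (h | ⟨hx, rfl⟩)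
    · exact hq.irrefl x h
    · exact hx.2 rfl
  · rintro x - y - z - (hxy | ⟨hx, rfl⟩) (hyz | ⟨hy, rfl⟩)
    · exact Or.inl (hq.trans hxy hyz)
    · exact Or.inr ⟨(hq.1 x y hxy).1, rfl⟩
    · exact absurd rfl (hq.1 y z hyz).1.2
    · exact absurd rfl hy.2
  · rcases eq_or_ne x a with rfl | hxa
    · exact Or.inr ((isLastAmong_appendLast ha).2 y hy hxy.symm)
    rcases eq_or_ne y a with rfl | hya
    · exact Or.inl ((isLastAmong_appendLast ha).2 x hx hxy)
    · exact (hq.2.2.2 x ⟨hx, hxa⟩ y ⟨hy, hya⟩ hxy).imp Or.inl Or.inl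

theorem restrictRel_appendLast_of_notMem (ha : a ∉ A) :
    restrictRel A (appendLast S a q) = restrictRel A q := by
  ext x y
  refine ⟨?_, fun ⟨hx, hy, h⟩ => ⟨hx, hy, Or.inl h⟩⟩
  rintro ⟨hx, hy, h | ⟨-, rfl⟩⟩
  · exact ⟨hx, hy, h⟩
  · exact absurd hy ha

theorem restrictRel_appendLast_of_mem (hq : IsLinearOrderOn (S \ {a}) q) (hA : A ⊆ S)
    (ha : a ∈ A) :
    restrictRel A (appendLast S a q) = appendLast A a (restrictRel (A \ {a}) q) := by
  ext x y
  constructor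
  · rintro ⟨hx, hy, h | ⟨hxa, rfl⟩⟩
    · exact Or.inl ⟨⟨hx, (hq.1 x y h).1.2⟩, ⟨hy, (hq.1 x y h).2.2⟩, h⟩
    · exact Or.inr ⟨⟨hx, hxa.2⟩, rfl⟩
  · rintro (⟨hx, hy, h⟩ | ⟨hx, rfl⟩)
    · exact ⟨hx.1, hy.1, Or.inl h⟩
    · exact ⟨hx.1, ha, Or.inr ⟨⟨hA hx.1, hx.2⟩, rfl⟩⟩

theorem appendLast_restrictRel (hq : IsLinearOrderOn S q) (ha : IsLastAmong q S a) :
    appendLast S a (restrictRel (S \ {a}) q) = q := by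
  ext x y
  constructor
  · rintro (h | ⟨hx, rfl⟩)
    · exact h.2.2
    · exact ha.2 x hx.1 hx.2
  · intro h
    obtain ⟨hx, hy⟩ := hq.1 x y h
    have hxa : x ≠ a := by
      rintro rfl
      exact hq.asymm h (ha.2 y hy (hq.ne h).symm)
    rcases eq_or_ne y a with rfl | hya
    · exact Or.inr ⟨⟨hx, hxa⟩, rfl⟩
    · exact Or.inl ⟨⟨hx, hxa⟩, ⟨hy, hya⟩, h⟩

theorem injOn_appendLast (S : Set α) (a : α) :
    Set.InjOn (appendLast S a) {q | IsLinearOrderOn (S \ {a}) q} := by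
  intro p hp q hq h
  have ha : a ∉ S \ {a} := fun h => h.2 rfl
  rw [← hp.restrictRel_self, ← hq.restrictRel_self, ← restrictRel_appendLast_of_notMem ha, h,
    restrictRel_appendLast_of_notMem ha]

end AppendLast

section PermittedLast

variable {α : Type*} {P : α → α → α → Prop} {X S A : Set α} {a : α} {q : α → α → Prop}

/-- The linear orders on `S` that obey `P`, where `P x y z` says that `x` may be ranked last in
the triple `x`, `y`, `z`. -/
def ordersObeying (P : α → α → α → Prop) (S : Set α) : Set (α → α → Prop) :=
  {q | IsLinearOrderOn S q ∧ ∀ x, {y | q y x}.Pairwise (P x)}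

/-- The elements of `S` that `P` permits in last place in every triple of elements of `S`. -/
def permittedLast (P : α → α → α → Prop) (S : Set α) : Set α :=
  {x ∈ S | (S \ {x}).Pairwise (P x)}

/-- Every subset of `X` with at least two elements has exactly two elements that `P` permits in
last place. -/
def HasTwoPermittedLast (P : α → α → α → Prop) (X : Set α) : Prop :=
  ∀ S ⊆ X, S.Nontrivial → (permittedLast P S).ncard = 2

theorem permittedLast_subset (P : α → α → α → Prop) (S : Set α) : permittedLast P S ⊆ S :=
  Set.sep_subset S _

theorem inter_permittedLast_subset (hA : A ⊆ S) : A ∩ permittedLast P S ⊆ permittedLast P A :=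
  fun _ hx => ⟨hx.1, hx.2.2.mono (Set.sdiff_subset_sdiff_left hA)⟩

theorem permittedLast_of_subsingleton (hS : S.Subsingleton) : permittedLast P S = S :=
  (permittedLast_subset P S).antisymm fun _ hx =>
    ⟨hx, (hS.anti Set.sdiff_subset).pairwise _⟩

theorem IsLastAmong.mem_permittedLast (ha : IsLastAmong q A a) (hq : q ∈ ordersObeying P S) :
    a ∈ permittedLast P A :=
  ⟨ha.1, (hq.2 a).mono fun b hb => ha.2 b hb.1 hb.2⟩

theorem restrictRel_mem_ordersObeying (hq : q ∈ ordersObeying P S) (hA : A ⊆ S) :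
    restrictRel A q ∈ ordersObeying P A :=
  ⟨hq.1.restrictRel hA, fun x => (hq.2 x).mono fun _ h => h.2.2⟩

theorem appendLast_mem_ordersObeying (ha : a ∈ permittedLast P S)
    (hq : q ∈ ordersObeying P (S \ {a})) : appendLast S a q ∈ ordersObeying P S := by
  refine ⟨hq.1.appendLast ha.1, fun x => ?_⟩
  rcases eq_or_ne x a with rfl | hxa
  · refine ha.2.mono ?_
    rintro y (h | ⟨hy, -⟩)
    · exact (hq.1.1 y x h).1
    · exact hy
  · exact (hq.2 x).mono fun y h => h.resolve_right fun h => hxa h.2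

theorem ordersObeying_eq_biUnion_appendLast (hS : S.Finite) (hne : S.Nonempty) :
    ordersObeying P S = ⋃ a ∈ permittedLast P S, appendLast S a '' ordersObeying P (S \ {a}) := by
  ext q
  simp only [Set.mem_iUnion₂]
  constructor
  · intro hq
    obtain ⟨a, ha⟩ := hq.1.exists_isLastAmong subset_rfl hS hne
    exact ⟨a, ha.mem_permittedLast hq, _, restrictRel_mem_ordersObeying hq Set.sdiff_subset,
      appendLast_restrictRel hq.1 ha⟩
  · rintro ⟨a, ha, p, hp, rfl⟩
    exact appendLast_mem_ordersObeying ha hp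

theorem ordersObeying_of_subsingleton (hS : S.Subsingleton) : ordersObeying P S = {⊥} := by
  refine Set.eq_singleton_iff_unique_mem.2 ⟨⟨⟨fun _ _ h => h.elim, fun _ _ h => h,
    fun _ _ _ _ _ _ h => h.elim, fun x hx y hy hxy => absurd (hS hx hy) hxy⟩,
    fun _ _ h => h.elim⟩, fun q hq => ?_⟩
  ext x y
  exact ⟨fun h => hq.1.ne h (hS (hq.1.1 x y h).1 (hq.1.1 x y h).2), False.elim⟩

theorem encard_appendLast_image (S : Set α) (a : α) :
    (appendLast S a '' ordersObeying P (S \ {a})).encard = (ordersObeying P (S \ {a})).encard :=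
  ((injOn_appendLast S a).mono fun _ hq => hq.1).encard_image

theorem disjoint_appendLast_image {b : α} (ha : a ∈ S) (hb : b ∈ S) (hab : a ≠ b) :
    Disjoint (appendLast S a '' ordersObeying P (S \ {a}))
      (appendLast S b '' ordersObeying P (S \ {b})) := by
  rw [Set.disjoint_left]
  rintro _ ⟨p, hp, rfl⟩ ⟨q, -, h⟩
  have hba : appendLast S a p b a := (isLastAmong_appendLast ha).2 b hb hab.symm
  have hab : appendLast S a p a b := h ▸ (isLastAmong_appendLast hb).2 a ha hab
  exact (hp.1.appendLast ha).asymm hab hba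

namespace HasTwoPermittedLast

theorem mono (hP : HasTwoPermittedLast P X) (hA : A ⊆ X) : HasTwoPermittedLast P A :=
  fun S hS => hP S (hS.trans hA)

theorem permittedLast_nonempty (hP : HasTwoPermittedLast P S) (hne : S.Nonempty) :
    (permittedLast P S).Nonempty := by
  rcases S.subsingleton_or_nontrivial with hS | hS
  · rwa [permittedLast_of_subsingleton hS]
  · exact Set.nonempty_of_ncard_ne_zero (by rw [hP S subset_rfl hS]; decide)

theorem permittedLast_subset_of_subset (hP : HasTwoPermittedLast P S) (hAS : A ⊆ S)
    (hA : permittedLast P S ⊆ A) : permittedLast P A ⊆ permittedLast P S := by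
  rcases S.subsingleton_or_nontrivial with hS | hS
  · rw [permittedLast_of_subsingleton hS]
    exact (permittedLast_subset P A).trans hAS
  · have hcardS : (permittedLast P S).ncard = 2 := hP S subset_rfl hS
    have hAnontrivial : A.Nontrivial :=
      (Set.one_lt_ncard_iff_nontrivial_and_finite.1 (by lia)).1.mono hA
    have hcardA : (permittedLast P A).ncard = 2 := hP A hAS hAnontrivial
    have hsub : permittedLast P S ⊆ permittedLast P A :=
      (Set.subset_inter hA subset_rfl).trans (inter_permittedLast_subset hAS)
    exact (Set.eq_of_subset_of_ncard_le hsub (by lia) (Set.finite_of_ncard_pos (by lia))).ge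

theorem encard_ordersObeying (hP : HasTwoPermittedLast P S) (hS : S.Finite) :
    (ordersObeying P S).encard = 2 ^ (S.ncard - 1) := by
  induction hk : S.ncard - 1 generalizing S with
  | zero =>
    have hsub : S.Subsingleton := (Set.ncard_le_one hS).1 (by lia)
    rw [ordersObeying_of_subsingleton hsub, Set.encard_singleton, pow_zero]
  | succ k ih =>
    have hnontrivial : S.Nontrivial :=
      (Set.one_lt_ncard_iff_nontrivial_and_finite.1 (by lia)).1
    obtain ⟨a, b, hab, hlast⟩ := Set.ncard_eq_two.1 (hP S subset_rfl hnontrivial)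
    have ha : a ∈ S := permittedLast_subset P S (hlast ▸ Set.mem_insert a {b})
    have hb : b ∈ S := permittedLast_subset P S (hlast ▸ Set.mem_insert_of_mem a rfl)
    have hcard (c : α) (hc : c ∈ S) : (ordersObeying P (S \ {c})).encard = 2 ^ k :=
      ih (hP.mono Set.sdiff_subset) hS.sdiff (by rw [Set.ncard_sdiff_singleton_of_mem hc, hk]; lia)
    rw [ordersObeying_eq_biUnion_appendLast hS hnontrivial.nonempty, hlast, Set.biUnion_pair,
      Set.encard_union_eq (disjoint_appendLast_image ha hb hab), encard_appendLast_image,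
      encard_appendLast_image, hcard a ha, hcard b hb, pow_succ, mul_two]

theorem exists_restrictRel_eq (hP : HasTwoPermittedLast P S) (hS : S.Finite) (hA : A ⊆ S)
    (hq : q ∈ ordersObeying P A) : ∃ p ∈ ordersObeying P S, restrictRel A p = q := by
  induction hk : S.ncard generalizing S A q with
  | zero =>
    obtain rfl : S = ∅ := (Set.ncard_eq_zero hS).1 hk
    obtain rfl : A = ∅ := Set.subset_empty_iff.1 hA
    exact ⟨q, hq, hq.1.restrictRel_self⟩
  | succ k ih =>
    have hcard {a : α} (ha : a ∈ S) : (S \ {a}).ncard = k := by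
      rw [Set.ncard_sdiff_singleton_of_mem ha, hk, Nat.add_sub_cancel]
    by_cases hlast : permittedLast P S ⊆ A
    · have hne : A.Nonempty :=
        (hP.permittedLast_nonempty (Set.nonempty_of_ncard_ne_zero (by lia))).mono hlast
      obtain ⟨a, ha⟩ := hq.1.exists_isLastAmong subset_rfl (hS.subset hA) hne
      have haS : a ∈ permittedLast P S :=
        hP.permittedLast_subset_of_subset hA hlast (ha.mem_permittedLast hq)
      obtain ⟨p, hp, hpq⟩ := ih (hP.mono Set.sdiff_subset) hS.sdiff
        (Set.sdiff_subset_sdiff_left hA) (restrictRel_mem_ordersObeying hq Set.sdiff_subset)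
        (hcard haS.1)
      refine ⟨appendLast S a p, appendLast_mem_ordersObeying haS hp, ?_⟩
      rw [restrictRel_appendLast_of_mem hp.1 hA ha.1, hpq, appendLast_restrictRel hq.1 ha]
    · obtain ⟨a, haS, haA⟩ := Set.not_subset.1 hlast
      obtain ⟨p, hp, hpq⟩ := ih (hP.mono Set.sdiff_subset) hS.sdiff
        (Set.subset_sdiff_singleton hA haA) hq (hcard haS.1)
      exact ⟨appendLast S a p, appendLast_mem_ordersObeying haS hp,
        (restrictRel_appendLast_of_notMem haA).trans hpq⟩

theorem restrictDom_ordersObeying (hP : HasTwoPermittedLast P S) (hS : S.Finite) (hA : A ⊆ S) :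
    restrictDom A (ordersObeying P S) = ordersObeying P A :=
  Set.Subset.antisymm
    (Set.image_subset_iff.2 fun q (hq : q ∈ ordersObeying P S) =>
      restrictRel_mem_ordersObeying hq hA)
    fun _ hq => hP.exists_restrictRel_eq hS hA hq

theorem isArrowSinglePeaked_ordersObeying (hP : HasTwoPermittedLast P X) :
    IsArrowSinglePeaked X (ordersObeying P X) := by
  refine ⟨fun q hq => hq.1, fun T hTX hT => ?_⟩
  have hcard : (permittedLast P T).ncard = 2 :=
    hP T hTX (Set.one_lt_ncard_iff_nontrivial_and_finite.1 (by lia)).1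
  have hlt : (permittedLast P T).ncard < T.ncard := by lia
  obtain ⟨x, hxT, hx⟩ := Set.exists_mem_notMem_of_ncard_lt_ncard hlt
    (Set.finite_of_ncard_pos (by lia))
  exact ⟨x, hxT, fun q hq hlast => hx (IsLastAmong.mem_permittedLast ⟨hxT, hlast⟩ hq)⟩

end HasTwoPermittedLast

end PermittedLast

section CompletedRule

variable {α : Type*} {X S : Set α} {D : Set (α → α → Prop)} {r : α → α → Prop}

/-- Some order of `D` ranks `x` last in the triple `x`, `y`, `z`. -/
def RankedLast (D : Set (α → α → Prop)) (x y z : α) : Prop :=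
  ∃ q ∈ D, q y x ∧ q z x

/-- Completes `RankedLast D` to a relation that permits exactly two alternatives of every triple
in last place: besides those that `D` ranks last, it permits the ones placed by the reference
order `r ∈ D` below an alternative of the triple that `D` never ranks last. -/
def completedRule (D : Set (α → α → Prop)) (r : α → α → Prop) (x y z : α) : Prop :=
  RankedLast D x y z ∨ r y x ∧ ¬ RankedLast D y x z ∨ r z x ∧ ¬ RankedLast D z x y

theorem subset_ordersObeying_completedRule (hD : IsDomainOn X D) (r : α → α → Prop) :
    D ⊆ ordersObeying (completedRule D r) X :=
  fun q hq => ⟨hD q hq, fun _ _ hy _ hz _ => Or.inl ⟨q, hq, hy, hz⟩⟩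

theorem IsArrowSinglePeaked.not_rankedLast_triple (hD : IsArrowSinglePeaked X D) {a b c : α}
    (hX : {a, b, c} ⊆ X) (hcard : ({a, b, c} : Set α).ncard = 3) (ha : RankedLast D a b c)
    (hb : RankedLast D b a c) : ¬ RankedLast D c a b := by
  rintro ⟨q, hq, hac, hbc⟩
  obtain ⟨p, hp, hba, hca⟩ := ha
  obtain ⟨s, hs, hab, hcb⟩ := hb
  obtain ⟨x, rfl | rfl | rfl, hx⟩ := hD.2 {a, b, c} hX hcard
  · exact hx p hp (by grind)
  · exact hx s hs (by grind)
  · exact hx q hq (by grind)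

theorem not_subset_permittedLast_completedRule (hD : IsArrowSinglePeaked X D) (hr : r ∈ D)
    {T : Set α} (hTX : T ⊆ X) (hT : T.ncard = 3) :
    ¬ T ⊆ permittedLast (completedRule D r) T := by
  have hlin : IsLinearOrderOn X r := hD.1 r hr
  obtain ⟨a, b, c, hab, hbc, rfl⟩ := hlin.exists_sorted_triple hTX hT
  have hac : r a c := hlin.trans hab hbc
  have hab' : a ≠ b := hlin.ne hab
  have hac' : a ≠ c := hlin.ne hac
  have hbc' : b ≠ c := hlin.ne hbc
  intro hsub
  have hPa : completedRule D r a b c := (hsub (by simp)).2 (by grind) (by grind) hbc'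
  have hPb : completedRule D r b a c := (hsub (by simp)).2 (by grind) (by grind) hac'
  have ha : RankedLast D a b c := hPa.resolve_right fun h =>
    h.elim (fun h => hlin.asymm hab h.1) fun h => hlin.asymm hac h.1
  have hb : RankedLast D b a c := hPb.resolve_right fun h =>
    h.elim (fun h => h.2 ha) fun h => hlin.asymm hbc h.1
  exact hD.not_rankedLast_triple hTX hT ha hb ⟨r, hr, hac, hbc⟩

theorem ncard_permittedLast_completedRule_le_two (hD : IsArrowSinglePeaked X D) (hr : r ∈ D)
    (hSX : S ⊆ X) : (permittedLast (completedRule D r) S).ncard ≤ 2 := by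
  by_contra! hcard
  obtain ⟨T, hTS, hT⟩ := Set.exists_subset_card_eq (Nat.succ_le_of_lt hcard)
  have hTS' : T ⊆ S := hTS.trans (permittedLast_subset _ S)
  exact not_subset_permittedLast_completedRule hD hr (hTS'.trans hSX) hT
    ((Set.subset_inter subset_rfl hTS).trans (inter_permittedLast_subset hTS'))

/-- When all of `D` agrees on the last element `d`, only `d` is ever ranked last in a triple
containing `d`, so the rule also permits the alternative that `r` places directly above `d`. -/
theorem mem_permittedLast_completedRule_of_forall_isLastAmong (hD : IsDomainOn X D) (hr : r ∈ D)
    {c d : α} (hd : ∀ q ∈ D, IsLastAmong q S d) (hc : IsLastAmong r (S \ {d}) c) :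
    c ∈ permittedLast (completedRule D r) S := by
  have not_above {q : α → α → Prop} (hq : q ∈ D) {x : α} (hx : x ∈ S) (hxd : x ≠ d) : ¬ q d x :=
    (hD q hq).asymm ((hd q hq).2 x hx hxd)
  refine ⟨hc.1.1, fun y ⟨hy, hyc⟩ z ⟨hz, hzc⟩ hyz => ?_⟩
  rcases eq_or_ne y d with rfl | hyd
  · exact Or.inr (Or.inr ⟨hc.2 z ⟨hz, hyz.symm⟩ hzc,
      fun ⟨_, hq, _, hyz'⟩ => not_above hq hz hyz.symm hyz'⟩)
  rcases eq_or_ne z d with rfl | hzd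
  · exact Or.inr (Or.inl ⟨hc.2 y ⟨hy, hyz⟩ hyc,
      fun ⟨_, hq, _, hzy⟩ => not_above hq hy hyz hzy⟩)
  · exact Or.inl ⟨r, hr, hc.2 y ⟨hy, hyd⟩ hyc, hc.2 z ⟨hz, hzd⟩ hzc⟩

theorem permittedLast_completedRule_nontrivial (hD : IsDomainOn X D) (hr : r ∈ D) (hSX : S ⊆ X)
    (hS : S.Finite) (hnontrivial : S.Nontrivial) :
    (permittedLast (completedRule D r) S).Nontrivial := by
  have last_mem {q : α → α → Prop} (hq : q ∈ D) {a : α} (ha : IsLastAmong q S a) :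
      a ∈ permittedLast (completedRule D r) S :=
    ha.mem_permittedLast (subset_ordersObeying_completedRule hD r hq)
  obtain ⟨d, hd⟩ := (hD r hr).exists_isLastAmong hSX hS hnontrivial.nonempty
  by_cases hall : ∀ q ∈ D, IsLastAmong q S d
  · obtain ⟨x, hx, hxd⟩ := hnontrivial.exists_ne d
    obtain ⟨c, hc⟩ := (hD r hr).exists_isLastAmong (S := S \ {d})
      (Set.sdiff_subset.trans hSX) hS.sdiff ⟨x, hx, hxd⟩
    exact ⟨c, mem_permittedLast_completedRule_of_forall_isLastAmong hD hr hall hc, d,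
      last_mem hr hd, hc.1.2⟩
  · push Not at hall
    obtain ⟨q, hq, hqd⟩ := hall
    obtain ⟨e, he⟩ := (hD q hq).exists_isLastAmong hSX hS hnontrivial.nonempty
    exact ⟨e, last_mem hq he, d, last_mem hr hd, fun hed => hqd (hed ▸ he)⟩

theorem hasTwoPermittedLast_completedRule (hD : IsArrowSinglePeaked X D) (hr : r ∈ D)
    (hX : X.Finite) : HasTwoPermittedLast (completedRule D r) X := by
  intro S hSX hnontrivial
  have hS : S.Finite := hX.subset hSX
  refine (ncard_permittedLast_completedRule_le_two hD hr hSX).antisymm ?_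
  exact Set.one_lt_ncard_iff_nontrivial_and_finite.2
    ⟨permittedLast_completedRule_nontrivial hD.1 hr hSX hS hnontrivial,
      hS.subset (permittedLast_subset _ S)⟩

end CompletedRule

section Maximal

variable {α : Type*} {X A : Set α} {D : Set (α → α → Prop)} {r : α → α → Prop}

theorem IsLinearOrderOn.isArrowSinglePeaked_singleton (hr : IsLinearOrderOn X r) :
    IsArrowSinglePeaked X {r} := by
  refine ⟨fun q hq => hq ▸ hr, fun T hTX hT => ?_⟩
  obtain ⟨a, b, c, hab, -, rfl⟩ := hr.exists_sorted_triple hTX hT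
  exact ⟨a, by simp, fun q hq hlast =>
    hr.asymm hab (hq ▸ hlast b (by simp) (hr.ne hab).symm)⟩

theorem IsMaximalArrowSinglePeaked.nonempty (hD : IsMaximalArrowSinglePeaked X D) :
    D.Nonempty := by
  rw [Set.nonempty_iff_ne_empty]
  rintro rfl
  obtain ⟨r, hr⟩ := exists_isLinearOrderOn X
  exact Set.singleton_ne_empty r (hD.2 {r} (Set.empty_subset _) hr.isArrowSinglePeaked_singleton)

theorem IsMaximalArrowSinglePeaked.exists_eq_ordersObeying (hD : IsMaximalArrowSinglePeaked X D)
    (hX : X.Finite) : ∃ P, HasTwoPermittedLast P X ∧ ordersObeying P X = D := by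
  obtain ⟨r, hr⟩ := hD.nonempty
  have hP := hasTwoPermittedLast_completedRule hD.1 hr hX
  exact ⟨completedRule D r, hP, hD.2 _ (subset_ordersObeying_completedRule hD.1.1 r)
    hP.isArrowSinglePeaked_ordersObeying⟩

theorem IsMaximalArrowSinglePeaked.ncard_restrictDom (hD : IsMaximalArrowSinglePeaked X D)
    (hX : X.Finite) (hA : A ⊆ X) : (restrictDom A D).ncard = 2 ^ (A.ncard - 1) := by
  obtain ⟨P, hP, rfl⟩ := hD.exists_eq_ordersObeying hX
  rw [hP.restrictDom_ordersObeying hX hA, Set.ncard,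
    (hP.mono hA).encard_ordersObeying (hX.subset hA)]
  simp

theorem IsDomainOn.restrictDom_self (hD : IsDomainOn X D) : restrictDom X D = D :=
  (Set.image_congr fun r hr => (hD r hr).restrictRel_self).trans (Set.image_id' D)

end Maximal

/-- Every maximal Arrow's single-peaked domain on an `n`-element set is exactly
`(k, 2^(k-1))`-abundant for every `1 ≤ k ≤ n`; in particular it has exactly
`2^(n-1)` orders. -/
theorem maximal_arrow_single_peaked_exactly_abundant {α : Type*} (n : ℕ) (hn : 1 ≤ n)
    (X : Set α) (hX : X.Finite) (hXcard : X.ncard = n)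
    (D : Set (α → α → Prop)) (hD : IsMaximalArrowSinglePeaked X D) :
    (∀ k : ℕ, 1 ≤ k → k ≤ n → IsExactlyAbundant X D k (2 ^ (k - 1))) ∧
      D.ncard = 2 ^ (n - 1) := by
  refine ⟨fun k _ hkn => ⟨fun A hA hAk => ?_, fun habundant => ?_⟩, ?_⟩
  · rw [hD.ncard_restrictDom hX hA, hAk]
  · obtain ⟨A, hA, hAk⟩ := Set.exists_subset_card_eq (hkn.trans hXcard.ge)
    have hle := habundant A hA hAk
    rw [hD.ncard_restrictDom hX hA, hAk] at hle
    exact Nat.not_succ_le_self _ hle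
  · rw [← hD.1.1.restrictDom_self, hD.ncard_restrictDom hX subset_rfl, hXcard]
end

section
/- Let A and B be disjoint nonempty finite sets, let D_1 be a nonempty domain on A and D_2 a nonempty domain on B, and let t be a positive integer. If D_1 and D_2 are each (k, 2^{k-1})-abundant for every k with 1 ≤ k ≤ t, then the domain S(D_1, D_2) on A ∪ B is (k, 2^{k-1})-abundant for every k with 1 ≤ k ≤ t. -/
/-- The concatenation `uv` of an order `u` on `A` with an order `v` on `B`
(for disjoint `A`, `B`): every element of `A` is ranked above every element of `B`,
`A` is ordered by `u` and `B` by `v`. -/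
def concatRel {α : Type*} (A B : Set α) (u v : α → α → Prop) : α → α → Prop :=
  fun a b => (a ∈ A ∧ b ∈ B) ∨ (a ∈ A ∧ b ∈ A ∧ u a b) ∨ (a ∈ B ∧ b ∈ B ∧ v a b)

/-- The domain `S(D₁,D₂)` on `A ∪ B`: all concatenations `uv` and `vu` for
`u ∈ D₁` and `v ∈ D₂`. -/
def sDomain {α : Type*} (A B : Set α) (D₁ D₂ : Set (α → α → Prop)) :
    Set (α → α → Prop) :=
  { r | ∃ u ∈ D₁, ∃ v ∈ D₂, r = concatRel A B u v ∨ r = concatRel B A v u }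

/-!
Let `C` be a `k`-subset of `A ∪ B`, with `i` elements in `A` and `j` in `B`. Restriction commutes
with `S`, so the orders induced on `C` are the members of `S(E₁, E₂)`, where `E₁` and `E₂` are the
restrictions of `D₁` to `C ∩ A` and of `D₂` to `C ∩ B`. If `i` and `j` are both positive, `uv` and
`vu` never coincide and each determines `u` and `v`, which gives exactly `2 * |E₁| * |E₂|` orders;
this is enough since `2 * 2 ^ (i - 1) * 2 ^ (j - 1) = 2 ^ (k - 1)`. If `i` or `j` is zero, the
orders induced on `C` are those of `D₂` or of `D₁` alone.
-/

section Concatenation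

variable {α : Type*} {A B C : Set α} {u u' v v' : α → α → Prop}

theorem restrictRel_restrictRel (A : Set α) (r : α → α → Prop) :
    restrictRel A (restrictRel A r) = restrictRel A r := by
  funext a b
  simp only [restrictRel, eq_iff_iff]
  tauto

theorem restrictRel_concatRel (A B C : Set α) (u v : α → α → Prop) :
    restrictRel C (concatRel A B u v) =
      concatRel (C ∩ A) (C ∩ B) (restrictRel (C ∩ A) u) (restrictRel (C ∩ B) v) := by
  funext a b
  simp only [restrictRel, concatRel, Set.mem_inter_iff, eq_iff_iff]
  tauto

theorem restrictRel_concatRel_of_subset_left (hAB : Disjoint A B) (hC : C ⊆ A) :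
    restrictRel C (concatRel A B u v) = restrictRel C u := by
  funext a b
  simp only [restrictRel, concatRel, eq_iff_iff]
  grind

theorem restrictRel_concatRel_of_subset_right (hAB : Disjoint A B) (hC : C ⊆ B) :
    restrictRel C (concatRel A B u v) = restrictRel C v := by
  funext a b
  simp only [restrictRel, concatRel, eq_iff_iff]
  grind

theorem concatRel_ne_concatRel_swap (hAB : Disjoint A B) (hA : A.Nonempty) (hB : B.Nonempty) :
    concatRel A B u v ≠ concatRel B A v' u' := by
  obtain ⟨a, ha⟩ := hA
  obtain ⟨b, hb⟩ := hB
  have haB : a ∉ B := Set.disjoint_left.mp hAB ha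
  have hbA : b ∉ A := Set.disjoint_right.mp hAB hb
  intro heq
  have hab : concatRel B A v' u' a b := heq ▸ Or.inl ⟨ha, hb⟩
  simp only [concatRel, haB, hbA, false_and, and_false, or_false] at hab

theorem concatRel_injOn (hAB : Disjoint A B) (D₁ D₂ : Set (α → α → Prop)) :
    Set.InjOn (Function.uncurry (concatRel A B)) (restrictDom A D₁ ×ˢ restrictDom B D₂) := by
  rintro ⟨_, _⟩ ⟨⟨u, -, rfl⟩, ⟨v, -, rfl⟩⟩ ⟨_, _⟩ ⟨⟨u', -, rfl⟩, ⟨v', -, rfl⟩⟩ heq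
  have hleft := congrArg (restrictRel A) heq
  have hright := congrArg (restrictRel B) heq
  simp only [Function.uncurry_apply_pair,
    restrictRel_concatRel_of_subset_left hAB subset_rfl,
    restrictRel_concatRel_of_subset_right hAB subset_rfl,
    restrictRel_restrictRel] at hleft hright
  exact Prod.ext hleft hright

end Concatenation

section SDomain

variable {α : Type*} {A B C : Set α} {D₁ D₂ : Set (α → α → Prop)}

theorem sDomain_comm (A B : Set α) (D₁ D₂ : Set (α → α → Prop)) :
    sDomain A B D₁ D₂ = sDomain B A D₂ D₁ := by
  ext r
  constructor <;> rintro ⟨u, hu, v, hv, h⟩ <;> exact ⟨v, hv, u, hu, h.symm⟩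

theorem sDomain_eq_union (A B : Set α) (D₁ D₂ : Set (α → α → Prop)) :
    sDomain A B D₁ D₂ =
      Set.image2 (concatRel A B) D₁ D₂ ∪ Set.image2 (concatRel B A) D₂ D₁ := by
  ext r
  simp only [sDomain, Set.mem_ofPred_eq, Set.mem_union, Set.mem_image2]
  grind

theorem restrictDom_sDomain (A B C : Set α) (D₁ D₂ : Set (α → α → Prop)) :
    restrictDom C (sDomain A B D₁ D₂) =
      sDomain (C ∩ A) (C ∩ B) (restrictDom (C ∩ A) D₁) (restrictDom (C ∩ B) D₂) := by
  simp only [sDomain_eq_union, restrictDom, Set.image_union]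
  rw [Set.image_image2_distrib (restrictRel_concatRel A B C),
    Set.image_image2_distrib (restrictRel_concatRel B A C)]

theorem restrictDom_sDomain_of_subset_left (hAB : Disjoint A B) (hD₂ : D₂.Nonempty) (hC : C ⊆ A) :
    restrictDom C (sDomain A B D₁ D₂) = restrictDom C D₁ := by
  apply subset_antisymm
  · rintro _ ⟨_, ⟨u, hu, v, -, rfl | rfl⟩, rfl⟩
    · exact ⟨u, hu, (restrictRel_concatRel_of_subset_left hAB hC).symm⟩
    · exact ⟨u, hu, (restrictRel_concatRel_of_subset_right hAB.symm hC).symm⟩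
  · obtain ⟨v, hv⟩ := hD₂
    rintro _ ⟨u, hu, rfl⟩
    exact ⟨_, ⟨u, hu, v, hv, Or.inl rfl⟩, restrictRel_concatRel_of_subset_left hAB hC⟩

theorem restrictDom_sDomain_of_subset_right (hAB : Disjoint A B) (hD₁ : D₁.Nonempty) (hC : C ⊆ B) :
    restrictDom C (sDomain A B D₁ D₂) = restrictDom C D₂ := by
  rw [sDomain_comm, restrictDom_sDomain_of_subset_left hAB.symm hD₁ hC]

theorem encard_image2_concatRel (hAB : Disjoint A B) (D₁ D₂ : Set (α → α → Prop)) :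
    (Set.image2 (concatRel A B) (restrictDom A D₁) (restrictDom B D₂)).encard =
      (restrictDom A D₁).encard * (restrictDom B D₂).encard := by
  rw [← Set.image_uncurry_prod, (concatRel_injOn hAB D₁ D₂).encard_image, Set.encard_prod]

theorem encard_sDomain_restrictDom (hAB : Disjoint A B) (hA : A.Nonempty) (hB : B.Nonempty)
    (D₁ D₂ : Set (α → α → Prop)) :
    (sDomain A B (restrictDom A D₁) (restrictDom B D₂)).encard =
      2 * ((restrictDom A D₁).encard * (restrictDom B D₂).encard) := by
  have hdisj : Disjoint (Set.image2 (concatRel A B) (restrictDom A D₁) (restrictDom B D₂))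
      (Set.image2 (concatRel B A) (restrictDom B D₂) (restrictDom A D₁)) := by
    rw [Set.disjoint_left]
    rintro _ ⟨u, -, v, -, rfl⟩ ⟨v', -, u', -, heq⟩
    exact concatRel_ne_concatRel_swap hAB hA hB heq.symm
  rw [sDomain_eq_union, Set.encard_union_eq hdisj, encard_image2_concatRel hAB,
    encard_image2_concatRel hAB.symm, mul_comm (restrictDom B D₂).encard, ← two_mul]

theorem ncard_restrictDom_sDomain (hAB : Disjoint A B)
    (hCA : (C ∩ A).Nonempty) (hCB : (C ∩ B).Nonempty) (D₁ D₂ : Set (α → α → Prop)) :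
    (restrictDom C (sDomain A B D₁ D₂)).ncard =
      2 * ((restrictDom (C ∩ A) D₁).ncard * (restrictDom (C ∩ B) D₂).ncard) := by
  have hdisj : Disjoint (C ∩ A) (C ∩ B) := hAB.mono Set.inter_subset_right Set.inter_subset_right
  rw [restrictDom_sDomain]
  simp only [Set.ncard_def, encard_sDomain_restrictDom hdisj hCA hCB, ENat.toNat_mul,
    ENat.toNat_ofNat]

end SDomain

theorem ncard_inter_add_ncard_inter {α : Type*} {A B C : Set α} (hAB : Disjoint A B)
    (hCfin : C.Finite) (hC : C ⊆ A ∪ B) : (C ∩ A).ncard + (C ∩ B).ncard = C.ncard := by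
  rw [← Set.ncard_union_eq (hAB.mono Set.inter_subset_right Set.inter_subset_right)
    (hCfin.inter_of_left A) (hCfin.inter_of_left B), ← Set.inter_union_distrib_left,
    Set.inter_eq_left.mpr hC]

theorem two_pow_add_sub_one {i j : ℕ} (hi : 1 ≤ i) (hj : 1 ≤ j) :
    2 ^ (i + j - 1) = 2 * (2 ^ (i - 1) * 2 ^ (j - 1)) := by
  rw [← pow_add, ← pow_succ']
  congr 1
  omega

theorem sDomain_abundant_general {α : Type*} {A B : Set α} (hAB : Disjoint A B)
    {D₁ D₂ : Set (α → α → Prop)} (hD₁ : D₁.Nonempty) (hD₂ : D₂.Nonempty) {s : ℕ → ℕ}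
    (hs : ∀ i j : ℕ, 1 ≤ i → 1 ≤ j → s (i + j) ≤ 2 * (s i * s j)) {t : ℕ}
    (h₁ : ∀ k : ℕ, 1 ≤ k → k ≤ t → IsAbundant A D₁ k (s k))
    (h₂ : ∀ k : ℕ, 1 ≤ k → k ≤ t → IsAbundant B D₂ k (s k)) :
    ∀ k : ℕ, 1 ≤ k → k ≤ t → IsAbundant (A ∪ B) (sDomain A B D₁ D₂) k (s k) := by
  rintro k hk hkt C hC rfl
  have hCfin : C.Finite := Set.finite_of_ncard_pos hk
  rcases (C ∩ B).eq_empty_or_nonempty with hCB | hCB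
  · have hsub : C ⊆ A := (Set.disjoint_iff_inter_eq_empty.mpr hCB).subset_left_of_subset_union hC
    rw [restrictDom_sDomain_of_subset_left hAB hD₂ hsub]
    exact h₁ _ hk hkt C hsub rfl
  rcases (C ∩ A).eq_empty_or_nonempty with hCA | hCA
  · have hsub : C ⊆ B := (Set.disjoint_iff_inter_eq_empty.mpr hCA).subset_right_of_subset_union hC
    rw [restrictDom_sDomain_of_subset_right hAB hD₁ hsub]
    exact h₂ _ hk hkt C hsub rfl
  have hsum : (C ∩ A).ncard + (C ∩ B).ncard = C.ncard := ncard_inter_add_ncard_inter hAB hCfin hC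
  have hposA : 1 ≤ (C ∩ A).ncard := (Set.ncard_pos (hCfin.inter_of_left A)).mpr hCA
  have hposB : 1 ≤ (C ∩ B).ncard := (Set.ncard_pos (hCfin.inter_of_left B)).mpr hCB
  calc s C.ncard
      = s ((C ∩ A).ncard + (C ∩ B).ncard) := by rw [hsum]
    _ ≤ 2 * (s (C ∩ A).ncard * s (C ∩ B).ncard) := hs _ _ hposA hposB
    _ ≤ 2 * ((restrictDom (C ∩ A) D₁).ncard * (restrictDom (C ∩ B) D₂).ncard) := by
        gcongr
        · exact h₁ _ hposA (by omega) _ Set.inter_subset_right rfl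
        · exact h₂ _ hposB (by omega) _ Set.inter_subset_right rfl
    _ = (restrictDom C (sDomain A B D₁ D₂)).ncard :=
        (ncard_restrictDom_sDomain hAB hCA hCB D₁ D₂).symm

/-- If `D₁` and `D₂` are nonempty domains on disjoint nonempty finite sets `A` and `B`
which are `(k, 2^(k-1))`-abundant for every `1 ≤ k ≤ t`, then so is `S(D₁,D₂)`
on `A ∪ B`. -/
theorem sDomain_abundant {α : Type*} (A B : Set α)
    (hAfin : A.Finite) (hBfin : B.Finite) (hA : A.Nonempty) (hB : B.Nonempty)
    (hdisj : Disjoint A B) (D₁ D₂ : Set (α → α → Prop))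
    (hD₁ : IsDomainOn A D₁) (hD₂ : IsDomainOn B D₂)
    (hD₁ne : D₁.Nonempty) (hD₂ne : D₂.Nonempty)
    (t : ℕ) (ht : 1 ≤ t)
    (h₁ : ∀ k : ℕ, 1 ≤ k → k ≤ t → IsAbundant A D₁ k (2 ^ (k - 1)))
    (h₂ : ∀ k : ℕ, 1 ≤ k → k ≤ t → IsAbundant B D₂ k (2 ^ (k - 1))) :
    ∀ k : ℕ, 1 ≤ k → k ≤ t → IsAbundant (A ∪ B) (sDomain A B D₁ D₂) k (2 ^ (k - 1)) :=
  sDomain_abundant_general hdisj hD₁ne hD₂ne (fun _ _ hi hj => (two_pow_add_sub_one hi hj).le) h₁ h₂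
end
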